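/- Let q = r^2 with r an odd prime power. Suppose q − 1 = e_1 f_1 = e_2 f_2, there exists an integer l ≥ 2 with e_1 ≡ 2^l (mod 2^{l+1}) and 2^l | e_2, and that 2e_2 | e_1(r+1) and e_1 | e_2(r−1). Let s, t be integers with 1 ≤ s ≤ D_1 and 1 ≤ t ≤ D_2, and set n_1 = s·f_1 + t·f_2. If the integer t·e_1(r+1)/(2e_2) is even, (r+1)/2 is even, and n_1 is even, then there exists an MDS almost self-dual code over F_q of length n_1 + 1, i.e., a linear code C ⊆ F_q^{n_1+1} with dim C = n_1/2, C ⊆ C⊥, dim C⊥ = dim C + 1, and minimum Hamming distance n_1/2 + 2. -/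

import Mathlib

/-- The Euclidean dual of a linear code `C ⊆ F^n`. -/
def dualCode {F : Type*} [Field F] {n : ℕ} (C : Submodule F (Fin n → F)) :
    Submodule F (Fin n → F) where
  carrier := {x | ∀ c ∈ C, ∑ i, x i * c i = 0}
  add_mem' := by
    intro a b ha hb c hc
    simp only [Set.mem_setOf_eq] at ha hb ⊢
    simp [Pi.add_apply, add_mul, Finset.sum_add_distrib, ha c hc, hb c hc]
  zero_mem' := by intro c hc; simp
  smul_mem' := by
    intro r a ha c hc
    simp only [Set.mem_setOf_eq] at ha ⊢
    simp [Pi.smul_apply, smul_eq_mul, mul_assoc, ← Finset.mul_sum, ha c hc]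

/-- `C` has minimum Hamming distance `d`. -/
def IsMinDist {F : Type*} [Field F] [DecidableEq F] {n : ℕ}
    (C : Submodule F (Fin n → F)) (d : ℕ) : Prop :=
  (∀ c ∈ C, c ≠ 0 → d ≤ hammingNorm c) ∧ ∃ c ∈ C, c ≠ 0 ∧ hammingNorm c = d

/-!
Evaluating the polynomials of degree `< k` at `n = 2 * k + 1` distinct points `aᵢ`, with column
multipliers `vᵢ`, gives an MDS code. It is self-orthogonal as soon as `vᵢ² = ∏_{j ≠ i} (aᵢ - aⱼ)⁻¹`,
because `∑ᵢ h(aᵢ) ∏_{j ≠ i} (aᵢ - aⱼ)⁻¹` is the coefficient of degree `n - 1` of any `h` of degree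
`< n`. So it suffices to find a monic split polynomial whose derivative is a nonzero square at each
of its roots.

The polynomial used is `X g₁(X ^ f₁) g₂(X ^ f₂)`, where the roots of `g₁` lie in the subfield of
order `r` and those of `g₂` lie in the group of elements of norm `1` over it. Nonzero elements of
the subfield are squares in `F`, and a difference of two elements `u ≠ w` of norm `1` satisfies
`(u - w) ^ (r - 1) = -(u * w)⁻¹`, which makes its quadratic character explicit. If
`f₁ * x = f₂ * y`, then `(a ^ f₁) ^ x = (a ^ f₂) ^ y` for every `a`; this is how the divisibility
hypotheses control `a ^ f₂` when `a ^ f₁` is a root of `g₁`, and conversely.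
-/

open Finset Polynomial
open Lagrange (nodal nodalWeight)
open Module (finrank)

section DualCode

variable {F : Type*} [Field F] {n : ℕ}

lemma finrank_dualCode_add_finrank (C : Submodule F (Fin n → F)) :
    finrank F (dualCode C) + finrank F C = n := by
  let B := Matrix.toBilin' (1 : Matrix (Fin n) (Fin n) F)
  have hB : B.Nondegenerate :=
    LinearMap.BilinForm.nondegenerate_toBilin'_of_det_ne_zero' _ (by simp)
  have hdual : dualCode C = B.orthogonal C := by
    ext x
    simp [B, dualCode, LinearMap.BilinForm.mem_orthogonal_iff, Matrix.toBilin'_apply',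
      dotProduct, mul_comm]
  have hle := C.finrank_le
  rw [hdual, LinearMap.BilinForm.finrank_orthogonal hB, Nat.sub_add_cancel hle,
    Module.finrank_fin_fun]

/-- An MDS almost self-dual code: a self-orthogonal code of codimension one in its dual whose
minimum distance meets the Singleton bound. -/
structure IsMDSAlmostSelfDual [DecidableEq F] (C : Submodule F (Fin n → F)) : Prop where
  le_dualCode : C ≤ dualCode C
  finrank_dualCode : finrank F (dualCode C) = finrank F C + 1
  isMinDist : IsMinDist C (n - finrank F C + 1)

lemma IsMDSAlmostSelfDual.length_eq [DecidableEq F] {C : Submodule F (Fin n → F)}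
    (hC : IsMDSAlmostSelfDual C) : n = 2 * finrank F C + 1 := by
  have h := finrank_dualCode_add_finrank C
  have h' := hC.finrank_dualCode
  omega

end DualCode

section GRSCode

variable {F : Type*} [Field F] {ι : Type*}

/-- The encoding map of generalized Reed–Solomon codes, with evaluation points `a` and column
multipliers `v`, on polynomials of arbitrary degree. -/
noncomputable def grsMap (a v : ι → F) : F[X] →ₗ[F] (ι → F) where
  toFun p i := v i * p.eval (a i)
  map_add' p q := by ext i; simp [mul_add]
  map_smul' c p := by ext i; simp [mul_left_comm]

@[simp]
lemma grsMap_apply (a v : ι → F) (p : F[X]) (i : ι) : grsMap a v p i = v i * p.eval (a i) := rfl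

/-- The generalized Reed–Solomon code `GRS_k(a, v)`, the image of the polynomials of degree `< k`;
the points `a` need not be distinct, nor the multipliers `v` nonzero. -/
noncomputable def grsCode (a v : ι → F) (k : ℕ) : Submodule F (ι → F) :=
  (degreeLT F k).map (grsMap a v)

lemma sum_nodalWeight_mul_eval_eq_zero [DecidableEq ι] {s : Finset ι} {a : ι → F}
    (ha : Set.InjOn a s) {p : F[X]} (hp : p.degree < (#s - 1 : ℕ)) :
    ∑ i ∈ s, nodalWeight s a i * p.eval (a i) = 0 := by
  have hcoeff := Lagrange.coeff_eq_sum ha (hp.trans_le (by exact_mod_cast Nat.sub_le _ _))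
  rw [coeff_eq_zero_of_degree_lt hp] at hcoeff
  rw [hcoeff]
  refine sum_congr rfl fun i _ ↦ ?_
  rw [nodalWeight, prod_inv_distrib, div_eq_inv_mul]

lemma grsCode_le_dualCode {n k : ℕ} {a v : Fin n → F} (ha : Function.Injective a)
    (hv : ∀ i, v i * v i = nodalWeight univ a i) (hk : 2 * k ≤ n) :
    grsCode a v k ≤ dualCode (grsCode a v k) := by
  rintro _ ⟨p, hp, rfl⟩ _ ⟨q, hq, rfl⟩
  have hpq : (p * q).degree < (#(univ : Finset (Fin n)) - 1 : ℕ) := by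
    rw [SetLike.mem_coe, mem_degreeLT] at hp hq
    rcases eq_or_ne p 0 with rfl | hp0
    · simp
    rcases eq_or_ne q 0 with rfl | hq0
    · simp
    rw [← natDegree_lt_iff_degree_lt hp0] at hp
    rw [← natDegree_lt_iff_degree_lt hq0] at hq
    rw [← natDegree_lt_iff_degree_lt (mul_ne_zero hp0 hq0), natDegree_mul hp0 hq0, card_univ,
      Fintype.card_fin]
    omega
  rw [← sum_nodalWeight_mul_eval_eq_zero ha.injOn hpq]
  refine sum_congr rfl fun i _ ↦ ?_
  rw [← hv i, eval_mul, grsMap_apply, grsMap_apply]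
  ring

variable [Fintype ι] {a v : ι → F}

lemma card_le_hammingNorm_grsMap_add_natDegree [DecidableEq F] (ha : Function.Injective a)
    (hv : ∀ i, v i ≠ 0) {p : F[X]} (hp : p ≠ 0) :
    Fintype.card ι ≤ hammingNorm (grsMap a v p) + p.natDegree := by
  have hzeros : #{i | p.eval (a i) = 0} ≤ p.natDegree := by
    rw [← card_image_of_injective _ ha]
    refine (card_le_card fun x hx ↦ ?_).trans (p.roots.toFinset_card_le.trans p.card_roots')
    obtain ⟨i, hi, rfl⟩ := mem_image.1 hx
    simpa [hp] using hi
  have hnorm : hammingNorm (grsMap a v p) = #{i | ¬p.eval (a i) = 0} := by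
    simp [hammingNorm, hv]
  have hsplit := card_filter_add_card_filter_not (s := univ) fun i ↦ p.eval (a i) = 0
  rw [card_univ] at hsplit
  omega

lemma hammingNorm_grsMap_nodal [DecidableEq F] (ha : Function.Injective a) (hv : ∀ i, v i ≠ 0)
    (T : Finset ι) : hammingNorm (grsMap a v (nodal T a)) = Fintype.card ι - #T := by
  classical
  rw [← card_compl, hammingNorm]
  congr 1
  ext i
  simp [hv, Lagrange.eval_nodal, prod_eq_zero_iff, sub_eq_zero, ha.eq_iff]

lemma grsMap_injOn_degreeLT (ha : Function.Injective a) (hv : ∀ i, v i ≠ 0) {k : ℕ}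
    (hk : k ≤ Fintype.card ι) : Set.InjOn (grsMap a v) (degreeLT F k) := by
  classical
  rw [← LinearMap.disjoint_ker_iff_injOn, LinearMap.disjoint_ker]
  intro p hp hp0
  by_contra hne
  have hcard := card_le_hammingNorm_grsMap_add_natDegree ha hv hne
  have hdeg := (natDegree_lt_iff_degree_lt hne).2 (mem_degreeLT.1 hp)
  rw [hp0, hammingNorm_zero] at hcard
  omega

lemma finrank_grsCode (ha : Function.Injective a) (hv : ∀ i, v i ≠ 0) {k : ℕ}
    (hk : k ≤ Fintype.card ι) : finrank F (grsCode a v k) = k := by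
  have hinj : Function.Injective ((grsMap a v).domRestrict (degreeLT F k)) :=
    Set.injOn_iff_injective.1 (grsMap_injOn_degreeLT ha hv hk)
  rw [grsCode, ← LinearMap.range_domRestrict, LinearMap.finrank_range_of_inj hinj,
    (degreeLTEquiv F k).finrank_eq, Module.finrank_fin_fun]

lemma isMinDist_grsCode [DecidableEq F] {n k : ℕ} {a v : Fin n → F} (ha : Function.Injective a)
    (hv : ∀ i, v i ≠ 0) (hk : 0 < k) (hkn : k ≤ n) : IsMinDist (grsCode a v k) (n - k + 1) := by
  constructor
  · rintro _ ⟨p, hp, rfl⟩ hne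
    have hp0 : p ≠ 0 := fun h ↦ hne (by rw [h, map_zero])
    have hcard := card_le_hammingNorm_grsMap_add_natDegree ha hv hp0
    have hdeg := (natDegree_lt_iff_degree_lt hp0).2 (mem_degreeLT.1 hp)
    rw [Fintype.card_fin] at hcard
    omega
  · obtain ⟨T, -, hT⟩ := exists_subset_card_eq (s := (univ : Finset (Fin n))) (n := k - 1)
      (by rw [card_univ, Fintype.card_fin]; omega)
    have hnorm : hammingNorm (grsMap a v (nodal T a)) = n - k + 1 := by
      rw [hammingNorm_grsMap_nodal ha hv, hT, Fintype.card_fin]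
      omega
    refine ⟨_, ⟨nodal T a, ?_, rfl⟩, ?_, hnorm⟩
    · rw [SetLike.mem_coe, mem_degreeLT, Lagrange.degree_nodal, hT]
      exact_mod_cast Nat.sub_lt hk one_pos
    · rw [← hammingNorm_ne_zero_iff, hnorm]
      exact Nat.succ_ne_zero _

lemma exists_isMDSAlmostSelfDual_of_isSquare_nodalWeight [DecidableEq F] {n : ℕ}
    {a : Fin n → F} (ha : Function.Injective a) (hsq : ∀ i, IsSquare (nodalWeight univ a i))
    (hodd : Odd n) (hn : 1 < n) : ∃ C : Submodule F (Fin n → F), IsMDSAlmostSelfDual C := by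
  choose v hv using hsq
  have hv0 (i) : v i ≠ 0 := by
    have := Lagrange.nodalWeight_ne_zero ha.injOn (mem_univ i)
    rw [hv i] at this
    exact left_ne_zero_of_mul this
  obtain ⟨k, rfl⟩ := hodd
  have hk : finrank F (grsCode a v k) = k :=
    finrank_grsCode ha hv0 (by rw [Fintype.card_fin]; omega)
  have hdual := finrank_dualCode_add_finrank (grsCode a v k)
  refine ⟨grsCode a v k, grsCode_le_dualCode ha (fun i ↦ (hv i).symm) (by omega), by omega, ?_⟩
  rw [hk]
  exact isMinDist_grsCode ha hv0 (by omega) (by omega)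

end GRSCode

section SplitPolynomial

variable {F : Type*} [Field F]

lemma nodup_roots_of_eval_derivative_ne_zero {P : F[X]} (hP : P ≠ 0)
    (h : ∀ a, P.IsRoot a → P.derivative.eval a ≠ 0) : P.roots.Nodup := by
  classical
  rw [Multiset.nodup_iff_count_le_one]
  intro a
  rw [count_roots]
  by_contra! hlt
  rw [one_lt_rootMultiplicity_iff_isRoot hP] at hlt
  exact h a hlt.1 hlt.2

lemma nodal_toFinset_roots [DecidableEq F] {P : F[X]} (hP : P.Monic) (hs : P.Splits)
    (hnd : P.roots.Nodup) : nodal P.roots.toFinset id = P := by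
  conv_rhs => rw [hs.eq_prod_roots_of_monic hP]
  rw [Lagrange.nodal_eq, Finset.prod, Multiset.toFinset_val, hnd.dedup]
  rfl

lemma exists_isMDSAlmostSelfDual_of_isSquare_eval_derivative [DecidableEq F] {n : ℕ}
    {P : F[X]} (hP : P.Monic) (hs : P.Splits) (hdeg : P.natDegree = n) (hodd : Odd n) (hn : 1 < n)
    (h : ∀ a, P.IsRoot a → P.derivative.eval a ≠ 0 ∧ IsSquare (P.derivative.eval a)) :
    ∃ C : Submodule F (Fin n → F), IsMDSAlmostSelfDual C := by
  have hnd := nodup_roots_of_eval_derivative_ne_zero hP.ne_zero fun a ha ↦ (h a ha).1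
  have hcard : #P.roots.toFinset = n := by
    rw [Multiset.toFinset_card_of_nodup hnd, splits_iff_card_roots.1 hs, hdeg]
  let e := P.roots.toFinset.equivFinOfCardEq hcard
  let a : Fin n → F := fun i ↦ e.symm i
  have ha : Function.Injective a := Subtype.val_injective.comp e.symm.injective
  have hnodal : nodal univ a = P := by
    rw [← nodal_toFinset_roots hP hs hnd, Lagrange.nodal_eq, Lagrange.nodal_eq,
      ← prod_coe_sort P.roots.toFinset]
    exact e.symm.prod_comp fun x : P.roots.toFinset ↦ X - C (x : F)
  refine exists_isMDSAlmostSelfDual_of_isSquare_nodalWeight ha (fun i ↦ ?_) hodd hn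
  have hroot : P.IsRoot (a i) := isRoot_of_mem_roots (Multiset.mem_toFinset.1 (e.symm i).2)
  rw [Lagrange.nodalWeight_eq_eval_derivative_nodal (mem_univ i), hnodal]
  exact (h _ hroot).2.inv

end SplitPolynomial

section QuadraticCharacter

variable {F : Type*} [Field F] [Fintype F]

lemma exists_ringHom_eq_pow {r : ℕ} (hr : r ∣ Fintype.card F) :
    ∃ φ : F →+* F, ∀ x, φ x = x ^ r := by
  obtain ⟨p, _, n, hp, hcard⟩ := FiniteField.card' F
  have : Fact p.Prime := ⟨hp⟩
  obtain ⟨m, -, rfl⟩ := (Nat.dvd_prime_pow hp).1 (hcard ▸ hr)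
  exact ⟨iterateFrobenius F p m, iterateFrobenius_def p m⟩

lemma sub_pow_of_dvd_card {r : ℕ} (hr : r ∣ Fintype.card F) (x y : F) :
    (x - y) ^ r = x ^ r - y ^ r := by
  obtain ⟨φ, hφ⟩ := exists_ringHom_eq_pow hr
  rw [← hφ, map_sub, hφ, hφ]

lemma natCast_pow_of_dvd_card {r : ℕ} (hr : r ∣ Fintype.card F) (n : ℕ) :
    (n : F) ^ r = n := by
  obtain ⟨φ, hφ⟩ := exists_ringHom_eq_pow hr
  rw [← hφ, map_natCast]

lemma sub_pow_pred_mul_mul_eq_neg_one {r : ℕ} (hr : r ∣ Fintype.card F) {u w : F}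
    (hu : u ^ (r + 1) = 1) (hw : w ^ (r + 1) = 1) (hne : u ≠ w) :
    (u - w) ^ (r - 1) * (u * w) = -1 := by
  have hr0 : r ≠ 0 := ne_zero_of_dvd_ne_zero Fintype.card_ne_zero hr
  have hsub : (u - w) ^ (r - 1) * (u - w) = u ^ r - w ^ r := by
    rw [pow_sub_one_mul hr0, sub_pow_of_dvd_card hr]
  apply mul_right_cancel₀ (sub_ne_zero.2 hne)
  rw [pow_succ] at hu hw
  linear_combination (u * w) * hsub + w * hu - u * hw

lemma natCast_ne_zero_of_dvd_card_sub_one {n : ℕ} (hn : n ∣ Fintype.card F - 1) : (n : F) ≠ 0 := by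
  intro h0
  obtain ⟨d, hd⟩ := hn
  have hcard : (Fintype.card F : F) = n * d + 1 := by
    rw [← Nat.sub_add_cancel Fintype.card_pos, hd]
    push_cast
    ring
  simp [h0] at hcard

lemma exists_isPrimitiveRoot_of_dvd_card_sub_one {n : ℕ} (hn : n ∣ Fintype.card F - 1) :
    ∃ ζ : F, IsPrimitiveRoot ζ n := by
  classical
  obtain ⟨g, hg⟩ := IsCyclic.exists_ofOrder_eq_natCard (α := Fˣ)
  obtain ⟨d, hd⟩ := hn
  rw [Nat.card_eq_fintype_card, Fintype.card_units, hd] at hg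
  have hpos : 0 < n * d := hd ▸ Nat.sub_pos_of_lt Fintype.one_lt_card
  have hprim := IsPrimitiveRoot.coe_units_iff.2 (hg ▸ IsPrimitiveRoot.orderOf g)
  exact ⟨_, hprim.pow hpos (mul_comm n d)⟩

lemma quadraticChar_eq_one_of_pow_eq_one [DecidableEq F] (hF : ringChar F ≠ 2) {x : F}
    (hx : x ^ (Fintype.card F / 2) = 1) : quadraticChar F x = 1 := by
  have hx0 : x ≠ 0 := by
    rintro rfl
    have hcard : 1 < Fintype.card F := Fintype.one_lt_card
    rw [zero_pow (by omega)] at hx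
    exact zero_ne_one hx
  rw [quadraticChar_one_iff_isSquare hx0]
  exact (FiniteField.isSquare_iff hF hx0).2 hx

variable {r R : ℕ}

lemma card_eq_two_mul_add_one (hF : Fintype.card F = r ^ 2) (hR : r + 1 = 2 * R) :
    Fintype.card F = 2 * ((r - 1) * R) + 1 := by
  have hr0 : r ≠ 0 := by
    rintro rfl
    exact Fintype.card_ne_zero hF
  obtain ⟨k, rfl⟩ := Nat.exists_eq_add_one_of_ne_zero hr0
  rw [hF, Nat.add_sub_cancel, mul_left_comm, ← hR]
  ring

lemma ringChar_ne_two (hF : Fintype.card F = r ^ 2) (hR : r + 1 = 2 * R) : ringChar F ≠ 2 := by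
  rw [Ne, FiniteField.even_card_iff_char_two, card_eq_two_mul_add_one hF hR]
  omega

lemma sub_pow_mul_pow_mul_pow_eq_one (hF : Fintype.card F = r ^ 2) (hR : r + 1 = 2 * R)
    (hReven : Even R) {u w : F} (hu : (u ^ R) ^ 2 = 1) (hw : (w ^ R) ^ 2 = 1) (hne : u ≠ w) :
    (u - w) ^ ((r - 1) * R) * (u ^ R * w ^ R) = 1 := by
  have hnorm {x : F} (hx : (x ^ R) ^ 2 = 1) : x ^ (r + 1) = 1 := by
    rw [hR, mul_comm, pow_mul, hx]
  have hsub := sub_pow_pred_mul_mul_eq_neg_one (hF ▸ dvd_pow_self r two_ne_zero)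
    (hnorm hu) (hnorm hw) hne
  rw [pow_mul, ← mul_pow, ← mul_pow, hsub, hReven.neg_one_pow]

variable [DecidableEq F]

lemma quadraticChar_eq_one_of_pow_mul_eq_one (hF : Fintype.card F = r ^ 2) (hR : r + 1 = 2 * R)
    {x : F} (hx : x ^ ((r - 1) * R) = 1) : quadraticChar F x = 1 := by
  refine quadraticChar_eq_one_of_pow_eq_one (ringChar_ne_two hF hR) ?_
  rwa [card_eq_two_mul_add_one hF hR, show (2 * ((r - 1) * R) + 1) / 2 = (r - 1) * R by omega]

lemma quadraticChar_eq_one_of_pow_eq_self (hF : Fintype.card F = r ^ 2) (hR : r + 1 = 2 * R)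
    {x : F} (hx0 : x ≠ 0) (hx : x ^ r = x) : quadraticChar F x = 1 := by
  have hr0 : r ≠ 0 := by
    rintro rfl
    exact Fintype.card_ne_zero hF
  have hpow : x ^ (r - 1) = 1 :=
    mul_right_cancel₀ hx0 (by rw [pow_sub_one_mul hr0, hx, one_mul])
  exact quadraticChar_eq_one_of_pow_mul_eq_one hF hR (by rw [pow_mul, hpow, one_pow])

lemma quadraticChar_sub_eq_one_of_pow_eq_self (hF : Fintype.card F = r ^ 2)
    (hR : r + 1 = 2 * R) {x y : F} (hx : x ^ r = x) (hy : y ^ r = y) (hne : x ≠ y) :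
    quadraticChar F (x - y) = 1 :=
  quadraticChar_eq_one_of_pow_eq_self hF hR (sub_ne_zero.2 hne) <| by
    rw [sub_pow_of_dvd_card (hF ▸ dvd_pow_self r two_ne_zero), hx, hy]

lemma quadraticChar_natCast_eq_one (hF : Fintype.card F = r ^ 2) (hR : r + 1 = 2 * R) {n : ℕ}
    (hn : (n : F) ≠ 0) : quadraticChar F n = 1 :=
  quadraticChar_eq_one_of_pow_eq_self hF hR hn <|
    natCast_pow_of_dvd_card (hF ▸ dvd_pow_self r two_ne_zero) n

lemma quadraticChar_eq_one_of_pow_sq_eq_one (hF : Fintype.card F = r ^ 2) (hR : r + 1 = 2 * R)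
    {w : F} (hw : (w ^ R) ^ 2 = 1) : quadraticChar F w = 1 := by
  have hexp : (r - 1) * R = R * 2 * (R - 1) := by
    rw [mul_assoc, mul_comm, show r - 1 = 2 * (R - 1) by omega]
  refine quadraticChar_eq_one_of_pow_mul_eq_one hF hR ?_
  rw [hexp, pow_mul, pow_mul, hw, one_pow]

lemma quadraticChar_sub_eq_one_of_pow_eq_pow (hF : Fintype.card F = r ^ 2)
    (hR : r + 1 = 2 * R) (hReven : Even R) {u w : F} (hw : (w ^ R) ^ 2 = 1)
    (huw : u ^ R = w ^ R) (hne : u ≠ w) : quadraticChar F (u - w) = 1 := by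
  have h := sub_pow_mul_pow_mul_pow_eq_one hF hR hReven (huw ▸ hw) hw hne
  rw [huw, ← sq, hw, mul_one] at h
  exact quadraticChar_eq_one_of_pow_mul_eq_one hF hR h

lemma quadraticChar_prod_sub_eq_one (hF : Fintype.card F = r ^ 2) (hR : r + 1 = 2 * R)
    (hReven : Even R) {B : Finset F} {ε u : F} (hε : ε ^ 2 = 1) (hεB : ε ^ #B = 1)
    (hB : ∀ w ∈ B, w ^ R = ε) (hu : u ^ R = 1) (huB : u ∉ B) :
    quadraticChar F (∏ w ∈ B, (u - w)) = 1 := by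
  have hfactor : ∀ w ∈ B, (u - w) ^ ((r - 1) * R) * ε = 1 := fun w hw ↦ by
    have h := sub_pow_mul_pow_mul_pow_eq_one hF hR hReven (by rw [hu, one_pow])
      (by rw [hB w hw, hε]) (ne_of_mem_of_not_mem hw huB).symm
    rwa [hu, hB w hw, one_mul] at h
  refine quadraticChar_eq_one_of_pow_mul_eq_one hF hR ?_
  calc (∏ w ∈ B, (u - w)) ^ ((r - 1) * R)
      = ∏ w ∈ B, (u - w) ^ ((r - 1) * R) * ε := by
        rw [prod_mul_distrib, prod_const, hεB, mul_one, prod_pow]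
    _ = 1 := prod_eq_one hfactor

end QuadraticCharacter

section LocatorPolynomial

lemma mul_eval_derivative_expand {R : Type*} [CommRing R] {f : ℕ} (hf : f ≠ 0) (p : R[X]) (a : R) :
    a * (expand R f p).derivative.eval a = f * a ^ f * p.derivative.eval (a ^ f) := by
  rw [derivative_expand, eval_mul, expand_eval, eval_mul, eval_natCast, eval_pow, eval_X,
    ← mul_pow_sub_one hf a]
  ring

variable {F : Type*} [Field F]

lemma splits_expand_nodal {f : ℕ} {ζ : F} (hζ : IsPrimitiveRoot ζ f) {B : Finset F}
    (hB : ∀ b ∈ B, ∃ β, β ^ f = b) : (expand F f (nodal B id)).Splits := by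
  rw [Lagrange.nodal_eq, map_prod]
  refine Splits.prod fun b hb ↦ ?_
  obtain ⟨β, hβ⟩ := hB b hb
  rw [map_sub, expand_X, id, expand_C]
  exact X_pow_sub_C_splits_of_isPrimitiveRoot hζ hβ

/-- The polynomial whose roots are the evaluation points of the code: `0`, the `f₁`-th roots of
the elements of `B₁` and the `f₂`-th roots of the elements of `B₂`. -/
noncomputable def locatorPoly (f₁ f₂ : ℕ) (B₁ B₂ : Finset F) : F[X] :=
  X * (expand F f₁ (nodal B₁ id) * expand F f₂ (nodal B₂ id))

variable {f₁ f₂ : ℕ} {B₁ B₂ : Finset F}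

lemma monic_locatorPoly (hf₁ : 0 < f₁) (hf₂ : 0 < f₂) : (locatorPoly f₁ f₂ B₁ B₂).Monic :=
  monic_X.mul ((Lagrange.nodal_monic.expand hf₁).mul (Lagrange.nodal_monic.expand hf₂))

lemma natDegree_locatorPoly (hf₁ : 0 < f₁) (hf₂ : 0 < f₂) :
    (locatorPoly f₁ f₂ B₁ B₂).natDegree = #B₁ * f₁ + #B₂ * f₂ + 1 := by
  have h₁ : (expand F f₁ (nodal B₁ id)).Monic := Lagrange.nodal_monic.expand hf₁
  have h₂ : (expand F f₂ (nodal B₂ id)).Monic := Lagrange.nodal_monic.expand hf₂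
  rw [locatorPoly, monic_X.natDegree_mul (h₁.mul h₂), h₁.natDegree_mul h₂, natDegree_X,
    natDegree_expand, natDegree_expand, Lagrange.natDegree_nodal, Lagrange.natDegree_nodal,
    add_comm]

lemma splits_locatorPoly {ζ₁ ζ₂ : F} (hζ₁ : IsPrimitiveRoot ζ₁ f₁) (hζ₂ : IsPrimitiveRoot ζ₂ f₂)
    (hB₁ : ∀ b ∈ B₁, ∃ β, β ^ f₁ = b) (hB₂ : ∀ b ∈ B₂, ∃ β, β ^ f₂ = b) :
    (locatorPoly f₁ f₂ B₁ B₂).Splits :=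
  Splits.X.mul ((splits_expand_nodal hζ₁ hB₁).mul (splits_expand_nodal hζ₂ hB₂))

lemma isRoot_locatorPoly_iff {a : F} : (locatorPoly f₁ f₂ B₁ B₂).IsRoot a ↔
    a = 0 ∨ a ^ f₁ ∈ B₁ ∨ a ^ f₂ ∈ B₂ := by
  simp [locatorPoly, IsRoot.def, expand_eval, Lagrange.eval_nodal, prod_eq_zero_iff, sub_eq_zero]

lemma locatorPoly_comm : locatorPoly f₁ f₂ B₁ B₂ = locatorPoly f₂ f₁ B₂ B₁ := by
  rw [locatorPoly, locatorPoly, mul_comm (expand F f₁ _)]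

lemma eval_derivative_locatorPoly_zero (hf₁ : f₁ ≠ 0) (hf₂ : f₂ ≠ 0) :
    (locatorPoly f₁ f₂ B₁ B₂).derivative.eval 0 = (∏ b ∈ B₁, -b) * ∏ b ∈ B₂, -b := by
  simp [locatorPoly, derivative_mul, expand_eval, Lagrange.eval_nodal, hf₁, hf₂]

lemma eval_derivative_locatorPoly_of_pow_mem [DecidableEq F] (hf₁ : f₁ ≠ 0) {a : F}
    (ha : a ^ f₁ ∈ B₁) : (locatorPoly f₁ f₂ B₁ B₂).derivative.eval a =
      f₁ * a ^ f₁ * (∏ b ∈ B₁.erase (a ^ f₁), (a ^ f₁ - b)) * ∏ b ∈ B₂, (a ^ f₂ - b) := by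
  have hroot : (nodal B₁ id).eval (a ^ f₁) = 0 := Lagrange.eval_nodal_at_node (v := id) ha
  have hder : (nodal B₁ id).derivative.eval (a ^ f₁) =
      ∏ b ∈ B₁.erase (a ^ f₁), (a ^ f₁ - b) :=
    (Lagrange.eval_nodal_derivative_eval_node_eq (v := id) ha).trans Lagrange.eval_nodal
  have hexpand := mul_eval_derivative_expand hf₁ (nodal B₁ id) a
  have hright : (nodal B₂ id).eval (a ^ f₂) = ∏ b ∈ B₂, (a ^ f₂ - b) := Lagrange.eval_nodal
  rw [hder] at hexpand
  simp only [locatorPoly, derivative_mul, derivative_X, eval_add, eval_mul, eval_one, eval_X,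
    expand_eval, hroot, hright]
  linear_combination (∏ b ∈ B₂, (a ^ f₂ - b)) * hexpand

variable [Fintype F] [DecidableEq F]

lemma quadraticChar_prod_eq_one {ι : Type*} {s : Finset ι} {g : ι → F}
    (h : ∀ i ∈ s, quadraticChar F (g i) = 1) : quadraticChar F (∏ i ∈ s, g i) = 1 := by
  rw [map_prod, prod_eq_one h]

/-- The conditions on the two sets of powers under which all derivatives at the roots of
`locatorPoly f₁ f₂ B₁ B₂` are squares, in the field of order `r ^ 2` with `r + 1 = 2 * R`: `B₁`
lies in the subfield of order `r`, `B₂` in a coset, of sign `ε = ±1`, of the `R`-th roots of unity,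
and the remaining powers of each root lie in the subfield or in the trivial coset as well. -/
structure IsLocatorPair (r R f₁ f₂ : ℕ) (B₁ B₂ : Finset F) (ε : F) : Prop where
  left_ne_zero : ∀ b ∈ B₁, b ≠ 0
  left_pow : ∀ b ∈ B₁, b ^ r = b
  right_pow : ∀ b ∈ B₂, b ^ R = ε
  sq_eq_one : ε ^ 2 = 1
  pow_card : ε ^ #B₂ = 1
  pow_of_left : ∀ a : F, a ^ f₁ ∈ B₁ → (a ^ f₂) ^ R = 1
  pow_of_right : ∀ a : F, a ^ f₂ ∈ B₂ → (a ^ f₁) ^ r = a ^ f₁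
  disjoint : ∀ a : F, a ^ f₁ ∈ B₁ → a ^ f₂ ∉ B₂

namespace IsLocatorPair

variable {r R : ℕ} {ε : F}

lemma quadraticChar_eval_derivative_zero (h : IsLocatorPair r R f₁ f₂ B₁ B₂ ε)
    (hF : Fintype.card F = r ^ 2) (hR : r + 1 = 2 * R) (hf₁ : f₁ ≠ 0) (hf₂ : f₂ ≠ 0) :
    quadraticChar F ((locatorPoly f₁ f₂ B₁ B₂).derivative.eval 0) = 1 := by
  have hrodd : Odd r := ⟨R - 1, by omega⟩
  rw [eval_derivative_locatorPoly_zero hf₁ hf₂, map_mul,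
    quadraticChar_prod_eq_one fun b hb ↦ ?_, quadraticChar_prod_eq_one fun b hb ↦ ?_, one_mul]
  · refine quadraticChar_eq_one_of_pow_sq_eq_one hF hR ?_
    rw [← pow_mul, mul_comm, pow_mul, neg_sq, ← pow_mul, mul_comm, pow_mul, h.right_pow b hb,
      h.sq_eq_one]
  · refine quadraticChar_eq_one_of_pow_eq_self hF hR (neg_ne_zero.2 (h.left_ne_zero b hb)) ?_
    rw [hrodd.neg_pow, h.left_pow b hb]

lemma quadraticChar_eval_derivative_of_left (h : IsLocatorPair r R f₁ f₂ B₁ B₂ ε)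
    (hF : Fintype.card F = r ^ 2) (hR : r + 1 = 2 * R) (hReven : Even R) (hf₁ : (f₁ : F) ≠ 0)
    {a : F} (ha : a ^ f₁ ∈ B₁) :
    quadraticChar F ((locatorPoly f₁ f₂ B₁ B₂).derivative.eval a) = 1 := by
  have hleft : quadraticChar F (∏ b ∈ B₁.erase (a ^ f₁), (a ^ f₁ - b)) = 1 :=
    quadraticChar_prod_eq_one fun b hb ↦
      quadraticChar_sub_eq_one_of_pow_eq_self hF hR (h.left_pow _ ha)
        (h.left_pow b (mem_of_mem_erase hb)) (ne_of_mem_erase hb).symm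
  have hright : quadraticChar F (∏ b ∈ B₂, (a ^ f₂ - b)) = 1 :=
    quadraticChar_prod_sub_eq_one hF hR hReven h.sq_eq_one h.pow_card h.right_pow
      (h.pow_of_left a ha) (h.disjoint a ha)
  rw [eval_derivative_locatorPoly_of_pow_mem (fun hf ↦ hf₁ (by rw [hf, Nat.cast_zero])) ha,
    map_mul, map_mul, map_mul, hleft, hright, quadraticChar_natCast_eq_one hF hR hf₁,
    quadraticChar_eq_one_of_pow_eq_self hF hR (h.left_ne_zero _ ha) (h.left_pow _ ha)]
  norm_num

lemma quadraticChar_eval_derivative_of_right (h : IsLocatorPair r R f₁ f₂ B₁ B₂ ε)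
    (hF : Fintype.card F = r ^ 2) (hR : r + 1 = 2 * R) (hReven : Even R) (hf₂ : (f₂ : F) ≠ 0)
    {a : F} (ha : a ^ f₂ ∈ B₂) :
    quadraticChar F ((locatorPoly f₁ f₂ B₁ B₂).derivative.eval a) = 1 := by
  have hsq : ((a ^ f₂) ^ R) ^ 2 = 1 := by rw [h.right_pow _ ha, h.sq_eq_one]
  have hright : quadraticChar F (∏ b ∈ B₂.erase (a ^ f₂), (a ^ f₂ - b)) = 1 := by
    refine quadraticChar_prod_eq_one fun b hb ↦ ?_
    have hb₂ := h.right_pow b (mem_of_mem_erase hb)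
    exact quadraticChar_sub_eq_one_of_pow_eq_pow hF hR hReven (by rw [hb₂, h.sq_eq_one])
      (by rw [hb₂, h.right_pow _ ha]) (ne_of_mem_erase hb).symm
  have hleft : quadraticChar F (∏ b ∈ B₁, (a ^ f₁ - b)) = 1 :=
    quadraticChar_prod_eq_one fun b hb ↦
      quadraticChar_sub_eq_one_of_pow_eq_self hF hR (h.pow_of_right a ha) (h.left_pow b hb)
        fun hab ↦ h.disjoint a (hab ▸ hb) ha
  rw [locatorPoly_comm,
    eval_derivative_locatorPoly_of_pow_mem (fun hf ↦ hf₂ (by rw [hf, Nat.cast_zero])) ha,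
    map_mul, map_mul, map_mul, hleft, hright, quadraticChar_natCast_eq_one hF hR hf₂,
    quadraticChar_eq_one_of_pow_sq_eq_one hF hR hsq]
  norm_num

lemma quadraticChar_eval_derivative_of_isRoot (h : IsLocatorPair r R f₁ f₂ B₁ B₂ ε)
    (hF : Fintype.card F = r ^ 2) (hR : r + 1 = 2 * R) (hReven : Even R) (hf₁ : (f₁ : F) ≠ 0)
    (hf₂ : (f₂ : F) ≠ 0) {a : F} (ha : (locatorPoly f₁ f₂ B₁ B₂).IsRoot a) :
    quadraticChar F ((locatorPoly f₁ f₂ B₁ B₂).derivative.eval a) = 1 := by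
  rcases isRoot_locatorPoly_iff.1 ha with rfl | ha₁ | ha₂
  · refine h.quadraticChar_eval_derivative_zero hF hR ?_ ?_ <;> rintro rfl <;> simp_all
  · exact h.quadraticChar_eval_derivative_of_left hF hR hReven hf₁ ha₁
  · exact h.quadraticChar_eval_derivative_of_right hF hR hReven hf₂ ha₂

lemma exists_isMDSAlmostSelfDual (h : IsLocatorPair r R f₁ f₂ B₁ B₂ ε)
    (hF : Fintype.card F = r ^ 2) (hR : r + 1 = 2 * R) (hReven : Even R)
    (hf₁ : f₁ ∣ Fintype.card F - 1) (hf₂ : f₂ ∣ Fintype.card F - 1)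
    (hB₁ : ∀ b ∈ B₁, ∃ β, β ^ f₁ = b) (hB₂ : ∀ b ∈ B₂, ∃ β, β ^ f₂ = b)
    (heven : Even (#B₁ * f₁ + #B₂ * f₂)) (hpos : 0 < #B₁ * f₁ + #B₂ * f₂) :
    ∃ C : Submodule F (Fin (#B₁ * f₁ + #B₂ * f₂ + 1) → F), IsMDSAlmostSelfDual C := by
  have hq : 0 < Fintype.card F - 1 := Nat.sub_pos_of_lt Fintype.one_lt_card
  have hf₁pos := Nat.pos_of_dvd_of_pos hf₁ hq
  have hf₂pos := Nat.pos_of_dvd_of_pos hf₂ hq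
  obtain ⟨ζ₁, hζ₁⟩ := exists_isPrimitiveRoot_of_dvd_card_sub_one hf₁
  obtain ⟨ζ₂, hζ₂⟩ := exists_isPrimitiveRoot_of_dvd_card_sub_one hf₂
  refine exists_isMDSAlmostSelfDual_of_isSquare_eval_derivative (monic_locatorPoly hf₁pos hf₂pos)
    (splits_locatorPoly hζ₁ hζ₂ hB₁ hB₂) (natDegree_locatorPoly hf₁pos hf₂pos) heven.add_one
    (by omega) fun a ha ↦ ?_
  have hχ := h.quadraticChar_eval_derivative_of_isRoot hF hR hReven
    (natCast_ne_zero_of_dvd_card_sub_one hf₁) (natCast_ne_zero_of_dvd_card_sub_one hf₂) ha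
  have hne : (locatorPoly f₁ f₂ B₁ B₂).derivative.eval a ≠ 0 := fun h0 ↦ by
    rw [h0, MulChar.map_zero] at hχ
    exact zero_ne_one hχ
  exact ⟨hne, (quadraticChar_one_iff_isSquare hne).1 hχ⟩

end IsLocatorPair

end LocatorPolynomial

section GeometricProgression

variable {F : Type*} [Field F] [DecidableEq F]

/-- The terms `c, c * ρ, …, c * ρ ^ (n - 1)` of a geometric progression; `B₁` and `B₂` are taken of
this form. -/
def geomFinset (c ρ : F) (n : ℕ) : Finset F := (range n).image fun i ↦ c * ρ ^ i

lemma card_geomFinset {c ρ : F} {n : ℕ} (hc : c ≠ 0) (hn : n ≤ orderOf ρ) :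
    #(geomFinset c ρ n) = n := by
  rw [geomFinset, card_image_of_injOn, card_range]
  intro i hi j hj hij
  exact pow_injOn_Iio_orderOf ((mem_range.1 hi).trans_le hn) ((mem_range.1 hj).trans_le hn)
    (mul_left_cancel₀ hc hij)

lemma pow_eq_pow_of_mem_geomFinset {c ρ b : F} {n y : ℕ} (hρ : ρ ^ y = 1)
    (hb : b ∈ geomFinset c ρ n) : b ^ y = c ^ y := by
  obtain ⟨i, -, rfl⟩ := mem_image.1 hb
  rw [mul_pow, ← pow_mul, mul_comm i, pow_mul, hρ, one_pow, mul_one]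

lemma exists_pow_eq_of_mem_geomFinset {c ρ b : F} {f n : ℕ}
    (hb : b ∈ geomFinset (c ^ f) (ρ ^ f) n) : ∃ β, β ^ f = b := by
  obtain ⟨i, -, rfl⟩ := mem_image.1 hb
  exact ⟨c * ρ ^ i, by ring⟩

variable {f₁ f₂ s t x y : ℕ} {α δ b : F}

lemma pow_eq_one_of_mem_geomFinset_left (hα : α ^ f₂ = 1) (hxy : f₁ * x = f₂ * y)
    (hb : b ∈ geomFinset 1 (α ^ f₁) s) : b ^ x = 1 := by
  have hρ : (α ^ f₁) ^ x = 1 := by rw [← pow_mul, hxy, pow_mul, hα, one_pow]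
  rw [pow_eq_pow_of_mem_geomFinset hρ hb, one_pow]

lemma pow_eq_neg_one_pow_of_mem_geomFinset_right (hδ : δ ^ f₁ = -1) (hxy : f₁ * x = f₂ * y)
    (hb : b ∈ geomFinset (δ ^ f₂) ((δ ^ 2) ^ f₂) t) : b ^ y = (-1) ^ x := by
  have hc : (δ ^ f₂) ^ y = (-1) ^ x := by rw [← pow_mul, ← hxy, pow_mul, hδ]
  have hρ : ((δ ^ 2) ^ f₂) ^ y = 1 := by
    rw [pow_right_comm δ, pow_right_comm _ 2, hc, pow_right_comm, neg_one_sq, one_pow]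
  rw [pow_eq_pow_of_mem_geomFinset hρ hb, hc]

lemma isLocatorPair_geomFinset {r R K L o m : ℕ} (hF : (-1 : F) ≠ 1) (hr : Odd r)
    (hα : α ^ f₂ = 1) (hδ : δ ^ f₁ = -1) (hf₁ : f₁ ≠ 0) (hK : f₁ * K = f₂ * R)
    (hL : f₁ * (r - 1) = f₂ * L) (ho : Odd o) (hm : f₁ * o = f₂ * m)
    (ht : t ≤ orderOf ((δ ^ 2) ^ f₂)) (hKt : Even (K * t)) :
    IsLocatorPair r R f₁ f₂ (geomFinset 1 (α ^ f₁) s) (geomFinset (δ ^ f₂) ((δ ^ 2) ^ f₂) t)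
      ((-1) ^ K) := by
  have hδ0 : δ ≠ 0 := by
    rintro rfl
    simp [zero_pow hf₁] at hδ
  have hr1 : Even (r - 1) := hr.tsub_odd odd_one
  have hpow_eq_self {x : F} (hx : x ^ (r - 1) = 1) : x ^ r = x := by
    rw [← pow_sub_one_mul hr.pos.ne', hx, one_mul]
  have transfer (a : F) {x y : ℕ} (hxy : f₁ * x = f₂ * y) : (a ^ f₁) ^ x = (a ^ f₂) ^ y := by
    rw [← pow_mul, hxy, pow_mul]
  exact {
    left_ne_zero b hb hb0 := by
      have hbo := pow_eq_one_of_mem_geomFinset_left hα hm hb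
      simp [hb0, ho.pos.ne'] at hbo
    left_pow b hb := hpow_eq_self (pow_eq_one_of_mem_geomFinset_left hα hL hb)
    right_pow b hb := pow_eq_neg_one_pow_of_mem_geomFinset_right hδ hK hb
    sq_eq_one := by rw [pow_right_comm, neg_one_sq, one_pow]
    pow_card := by rw [card_geomFinset (pow_ne_zero _ hδ0) ht, ← pow_mul, hKt.neg_one_pow]
    pow_of_left a ha := by rw [← transfer a hK, pow_eq_one_of_mem_geomFinset_left hα hK ha]
    pow_of_right a ha := hpow_eq_self <| by
      rw [transfer a hL, pow_eq_neg_one_pow_of_mem_geomFinset_right hδ hL ha, hr1.neg_one_pow]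
    disjoint a ha₁ ha₂ := hF <| by
      rw [← ho.neg_one_pow, ← pow_eq_neg_one_pow_of_mem_geomFinset_right hδ hm ha₂,
        ← transfer a hm, pow_eq_one_of_mem_geomFinset_left hα hm ha₁] }

theorem exists_isMDSAlmostSelfDual_of_dvd_card_sub_one [Fintype F] {r R K L o m : ℕ}
    (hF : Fintype.card F = r ^ 2) (hR : r + 1 = 2 * R) (hReven : Even R)
    (hf₁ : 2 * f₁ ∣ Fintype.card F - 1) (hf₂ : f₂ ∣ Fintype.card F - 1)
    (hK : f₁ * K = f₂ * R) (hL : f₁ * (r - 1) = f₂ * L) (ho : Odd o) (hm : f₁ * o = f₂ * m)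
    (hs : s ≤ f₂ / f₂.gcd f₁) (ht : t ≤ f₁ / f₁.gcd f₂)
    (hKt : Even (K * t)) (heven : Even (s * f₁ + t * f₂)) (hpos : 0 < s + t) :
    ∃ C : Submodule F (Fin (s * f₁ + t * f₂ + 1) → F), IsMDSAlmostSelfDual C := by
  have hq : 0 < Fintype.card F - 1 := Nat.sub_pos_of_lt Fintype.one_lt_card
  have hf₁pos : 0 < f₁ := Nat.pos_of_mul_pos_left (Nat.pos_of_dvd_of_pos hf₁ hq)
  have hf₂pos : 0 < f₂ := Nat.pos_of_dvd_of_pos hf₂ hq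
  obtain ⟨α, hα⟩ := exists_isPrimitiveRoot_of_dvd_card_sub_one hf₂
  obtain ⟨δ, hδ⟩ := exists_isPrimitiveRoot_of_dvd_card_sub_one hf₁
  have hδf₁ : δ ^ f₁ = -1 :=
    (hδ.pow (by omega) (mul_comm 2 f₁)).eq_neg_one_of_two_right
  have hδ2 : IsPrimitiveRoot (δ ^ 2) f₁ := hδ.pow (by omega) rfl
  have hs' : s ≤ orderOf (α ^ f₁) := by rwa [orderOf_pow' α hf₁pos.ne', ← hα.eq_orderOf]
  have ht' : t ≤ orderOf ((δ ^ 2) ^ f₂) := by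
    rwa [orderOf_pow' _ hf₂pos.ne', ← hδ2.eq_orderOf]
  have hpair := isLocatorPair_geomFinset (s := s)
    (Ring.neg_one_ne_one_of_char_ne_two (ringChar_ne_two hF hR)) ⟨R - 1, by omega⟩ hα.pow_eq_one
    hδf₁ hf₁pos.ne' hK hL ho hm ht' hKt
  have hB₁ : #(geomFinset 1 (α ^ f₁) s) = s := card_geomFinset one_ne_zero hs'
  have hB₂ : #(geomFinset (δ ^ f₂) ((δ ^ 2) ^ f₂) t) = t :=
    card_geomFinset (pow_ne_zero _ (hδ.ne_zero (by omega))) ht'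
  have hlen : 0 < s * f₁ + t * f₂ := by
    rcases Nat.add_pos_iff_pos_or_pos.1 hpos with h | h
    · exact Nat.add_pos_left (Nat.mul_pos h hf₁pos) _
    · exact Nat.add_pos_right _ (Nat.mul_pos h hf₂pos)
  have hcode := hpair.exists_isMDSAlmostSelfDual hF hR hReven ((dvd_mul_left _ _).trans hf₁) hf₂
    (fun b hb ↦ exists_pow_eq_of_mem_geomFinset (c := 1) (ρ := α) (by rwa [one_pow]))
    (fun b hb ↦ exists_pow_eq_of_mem_geomFinset hb)
  rw [hB₁, hB₂] at hcode
  exact hcode heven hlen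

end GeometricProgression

section Divisors

variable {e₁ e₂ f₁ f₂ : ℕ}

lemma mul_eq_mul_of_mul_eq_mul_cofactors (h : e₁ * f₁ = e₂ * f₂) (he₁ : 0 < e₁) {x y : ℕ}
    (hxy : e₁ * y = e₂ * x) : f₁ * x = f₂ * y := by
  apply Nat.eq_of_mul_eq_mul_left he₁
  linear_combination x * h - f₂ * hxy

lemma div_gcd_eq_div_gcd_cofactors (h : e₁ * f₁ = e₂ * f₂) (he₁ : 0 < e₁) (hf₂ : 0 < f₂) :
    e₁ / e₁.gcd e₂ = f₂ / f₂.gcd f₁ := by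
  have hgcd : e₁.gcd e₂ * f₂ = e₁ * f₂.gcd f₁ := by
    rw [← Nat.gcd_mul_right, ← h, Nat.gcd_mul_left]
  rw [← Nat.mul_div_mul_right _ _ hf₂, hgcd, Nat.mul_div_mul_left _ _ he₁]

lemma exists_odd_eq_two_pow_mul {e l : ℕ} (h : e % 2 ^ (l + 1) = 2 ^ l) :
    ∃ o, Odd o ∧ e = 2 ^ l * o := by
  refine ⟨2 * (e / 2 ^ (l + 1)) + 1, odd_two_mul_add_one _, ?_⟩
  conv_lhs => rw [← Nat.div_add_mod e (2 ^ (l + 1)), h]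
  ring

end Divisors

theorem mds_almost_self_dual_thm5_even_length_succ_general
    (r e1 f1 e2 f2 s t l : ℕ)
    (hr_odd : Odd r)
    (hq1 : r ^ 2 - 1 = e1 * f1) (hq2 : r ^ 2 - 1 = e2 * f2)
    (hl : 1 ≤ l) (he1 : e1 % 2 ^ (l + 1) = 2 ^ l) (he2 : 2 ^ l ∣ e2)
    (hdvd1 : 2 * e2 ∣ e1 * (r + 1)) (hdvd2 : e1 ∣ e2 * (r - 1))
    (hs : s ≤ e1 / Nat.gcd e1 e2) (ht : t ≤ e2 / Nat.gcd e1 e2) (hst : 0 < s + t)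
    (heven1 : Even (t * e1 * (r + 1) / (2 * e2)))
    (heven2 : Even ((r + 1) / 2))
    (hn1 : Even (s * f1 + t * f2))
    (F : Type*) [Field F] [Fintype F] [DecidableEq F]
    (hF : Fintype.card F = r ^ 2) :
    ∃ C : Submodule F (Fin (s * f1 + t * f2 + 1) → F),
      Module.finrank F C = (s * f1 + t * f2) / 2 ∧
      C ≤ dualCode C ∧
      Module.finrank F (dualCode C) = Module.finrank F C + 1 ∧
      IsMinDist C ((s * f1 + t * f2) / 2 + 2) := by
  have hq : 0 < r ^ 2 - 1 := hF ▸ Nat.sub_pos_of_lt Fintype.one_lt_card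
  have h : e1 * f1 = e2 * f2 := hq1.symm.trans hq2
  obtain ⟨he1pos, hf1pos⟩ : 0 < e1 ∧ 0 < f1 := CanonicallyOrderedAdd.mul_pos.1 (hq1 ▸ hq)
  obtain ⟨he2pos, hf2pos⟩ : 0 < e2 ∧ 0 < f2 := CanonicallyOrderedAdd.mul_pos.1 (hq2 ▸ hq)
  obtain ⟨R, hR⟩ : 2 ∣ r + 1 := hr_odd.add_one.two_dvd
  rw [hR, Nat.mul_div_cancel_left R two_pos] at heven2
  obtain ⟨K, hK⟩ := hdvd1
  obtain ⟨L, hL⟩ := hdvd2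
  obtain ⟨o, ho, hoe1⟩ := exists_odd_eq_two_pow_mul he1
  obtain ⟨m, hm⟩ := he2
  rw [mul_assoc, hK, mul_left_comm, Nat.mul_div_cancel_left _ (by omega), mul_comm] at heven1
  rw [hR] at hK
  have h2e1 : 2 ∣ e1 := hoe1 ▸ (dvd_pow_self 2 (by omega)).mul_right o
  have hf1 : 2 * f1 ∣ Fintype.card F - 1 := hF ▸ hq1 ▸ Nat.mul_dvd_mul_right h2e1 f1
  have hf2 : f2 ∣ Fintype.card F - 1 := hF ▸ hq2 ▸ dvd_mul_left f2 e2
  have cofactors {x y : ℕ} : e1 * y = e2 * x → f1 * x = f2 * y :=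
    mul_eq_mul_of_mul_eq_mul_cofactors h he1pos
  obtain ⟨C, hC⟩ := exists_isMDSAlmostSelfDual_of_dvd_card_sub_one hF hR heven2 hf1 hf2
    (cofactors (x := K) (y := R) (by linarith)) (cofactors hL.symm) ho
    (cofactors (x := o) (y := m) (by rw [hoe1, hm]; ring))
    (div_gcd_eq_div_gcd_cofactors h he1pos hf2pos ▸ hs)
    (div_gcd_eq_div_gcd_cofactors h.symm he2pos hf1pos ▸ Nat.gcd_comm e1 e2 ▸ ht)
    heven1 hn1 hst
  have hlen := hC.length_eq
  have hdim : finrank F C = (s * f1 + t * f2) / 2 := by omega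
  have hdist := hC.isMinDist
  rw [show s * f1 + t * f2 + 1 - finrank F C + 1 = (s * f1 + t * f2) / 2 + 2 by omega] at hdist
  exact ⟨C, hdim, hC.le_dualCode, hC.finrank_dualCode, hdist⟩

/-- Theorem 5.2(2): if `t·e₁(r+1)/(2e₂)`, `(r+1)/2` and `n₁ = s·f₁ + t·f₂` are all even,
there is a `q`-ary MDS almost self-dual code of length `n₁ + 1`, where `q = r²`. -/
theorem mds_almost_self_dual_thm5_even_length_succ
    (r e1 f1 e2 f2 s t l : ℕ)
    (hr_odd : Odd r) (hr_pp : IsPrimePow r)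
    (hq1 : r ^ 2 - 1 = e1 * f1) (hq2 : r ^ 2 - 1 = e2 * f2)
    (hl : 2 ≤ l) (he1 : e1 % 2 ^ (l + 1) = 2 ^ l) (he2 : 2 ^ l ∣ e2)
    (hdvd1 : 2 * e2 ∣ e1 * (r + 1)) (hdvd2 : e1 ∣ e2 * (r - 1))
    (hs1 : 1 ≤ s) (hs2 : s ≤ e1 / Nat.gcd e1 e2)
    (ht1 : 1 ≤ t) (ht2 : t ≤ e2 / Nat.gcd e1 e2)
    (heven1 : Even (t * e1 * (r + 1) / (2 * e2)))
    (heven2 : Even ((r + 1) / 2))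
    (hn1 : Even (s * f1 + t * f2))
    (F : Type*) [Field F] [Fintype F] [DecidableEq F]
    (hF : Fintype.card F = r ^ 2) :
    ∃ C : Submodule F (Fin (s * f1 + t * f2 + 1) → F),
      Module.finrank F C = (s * f1 + t * f2) / 2 ∧
      C ≤ dualCode C ∧
      Module.finrank F (dualCode C) = Module.finrank F C + 1 ∧
      IsMinDist C ((s * f1 + t * f2) / 2 + 2) := by
  exact mds_almost_self_dual_thm5_even_length_succ_general r e1 f1 e2 f2 s t l hr_odd hq1 hq2
    (by omega) he1 he2 hdvd1 hdvd2 hs2 ht2 (by omega) heven1 heven2 hn1 F hF
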